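/- Let n ≥ 1, m > n, and let p ∈ P^log(ℝ^n) be a measurable exponent with p⁻ = p_∞ = 2 and p⁺ < ∞. Define ζ(t) = 2/p⁻ = 1 for 0 < t ≤ 1 and ζ(t) = 2/p⁺ for t > 1, and define K(t) = 1/p⁺ + ζ(t)(1 − 2/p⁺) if either 0 < t ≤ 1 or [t > 1 and p⁺ > 4], and K(t) = 1/2 if t > 1 and p⁺ ≤ 4. Then there exists a constant C > 0, depending only on m, n and p, such that for every t > 0 and all u, v ∈ L^{p(·)}(ℝ^n), ‖η_{t,m} * (uv)‖_{L^{p(·)}(ℝ^n)} ≤ C t^{−nK(t)} ‖u‖_{L^{p(·)}(ℝ^n)} ‖v‖_{L^{p(·)}(ℝ^n)}. -/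

import Mathlib

open MeasureTheory Filter Real
open scoped ENNReal

noncomputable section

/-- Euclidean space `ℝⁿ`. -/
abbrev Esp (n : ℕ) := EuclideanSpace ℝ (Fin n)

/-- The variable exponent modular `ρ_{p(·)}(f) = ∫_{ℝⁿ} |f(x)|^{p(x)} dx`. -/
def vMod (n : ℕ) (p : Esp n → ℝ) (f : Esp n → ℝ) : ℝ≥0∞ :=
  ∫⁻ x, (ENNReal.ofReal |f x|) ^ (p x) ∂volume

/-- The Luxemburg norm `‖f‖_{L^{p(·)}} = inf {λ > 0 : ρ_{p(·)}(f/λ) ≤ 1}`. -/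
def luxNorm (n : ℕ) (p : Esp n → ℝ) (f : Esp n → ℝ) : ℝ :=
  sInf {lam : ℝ | 0 < lam ∧ vMod n p (fun x => f x / lam) ≤ 1}

/-- Membership in the variable exponent Lebesgue space `L^{p(·)}(ℝⁿ)`. -/
def MemVLp (n : ℕ) (p : Esp n → ℝ) (f : Esp n → ℝ) : Prop :=
  AEMeasurable f volume ∧ ∃ lam : ℝ, 0 < lam ∧ vMod n p (fun x => f x / lam) ≤ 1

/-- Global log-Hölder continuity of `1/p` with decay value `l` (representing `l = 1/p_∞`). -/
def IsLogHolder (n : ℕ) (p : Esp n → ℝ) (l : ℝ) : Prop :=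
  ∃ c : ℝ, 0 < c ∧
    (∀ x y : Esp n, |1 / p x - 1 / p y| ≤ c / Real.log (Real.exp 1 + 1 / ‖x - y‖)) ∧
    (∀ x : Esp n, |1 / p x - l| ≤ c / Real.log (Real.exp 1 + ‖x‖))

/-- The kernel `η_{t,m}(x) = t^{-n} (1 + |x|/t)^{-m}`. -/
def etaKer (n : ℕ) (t m : ℝ) (x : Esp n) : ℝ :=
  t ^ (-(n : ℝ)) * (1 + ‖x‖ / t) ^ (-m)

/-- Convolution `(u * v)(x) = ∫ u(x - y) v(y) dy`. -/
def convR (n : ℕ) (u v : Esp n → ℝ) (x : Esp n) : ℝ :=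
  ∫ y, u (x - y) * v y ∂volume

lemma aux_sq {a p P r c m : ℝ} (ha : 0 ≤ a) (hp2 : 2 ≤ p) (hpP : p ≤ P) (hr : 0 ≤ r)
    (hc : 0 < c) (hm : 0 < m)
    (h : |1 / p - 1 / 2| ≤ c / Real.log (Real.exp 1 + r)) :
    a ^ 2 ≤ Real.exp (2 * m * P * c) * a ^ p + (1 + r) ^ (-m) := by
  have hE : 1 ≤ Real.exp (2 * m * P * c) := by
    apply Real.one_le_exp
    have : 0 ≤ P := by linarith
    positivity
  have hs : (1 : ℝ) ≤ Real.exp 1 := Real.one_le_exp (by norm_num)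
  have h2 : 0 ≤ (1 + r) ^ (-m) := by positivity
  have hap : 0 ≤ a ^ p := Real.rpow_nonneg ha p
  have ha2 : a ^ 2 = a ^ (2 : ℝ) := by norm_cast
  have hlog : 1 ≤ Real.log (Real.exp 1 + r) := by
    rw [Real.le_log_iff_exp_le (by positivity)]; linarith
  set s := Real.exp 1 + r with hsdef
  have hspos : 0 < s := by positivity
  by_cases h1 : 1 ≤ a
  · have : a ^ (2 : ℝ) ≤ a ^ p := Real.rpow_le_rpow_of_exponent_le h1 hp2
    rw [ha2]; nlinarith
  push Not at h1
  by_cases h3 : a ≤ s ^ (-m)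
  · have h4 : s ^ (-m) ≤ (1 + r) ^ (-m) :=
      Real.rpow_le_rpow_of_nonpos (by positivity) (by linarith) (by linarith)
    nlinarith
  push Not at h3
  have hapos : 0 < a := lt_trans (by positivity) h3
  have hla : -m * Real.log s ≤ Real.log a := by
    rw [← Real.log_rpow hspos]
    exact Real.log_le_log (by positivity) h3.le
  have hd : p - 2 ≤ 2 * P * c / Real.log s := by
    have h5 : 1 / 2 - 1 / p ≤ c / Real.log s := by
      have := abs_le.1 h
      linarith [this.1]
    have h6 : p - 2 = 2 * p * (1 / 2 - 1 / p) := by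
      field_simp
    rw [h6]
    calc 2 * p * (1 / 2 - 1 / p) ≤ 2 * p * (c / Real.log s) := by gcongr
      _ ≤ 2 * P * (c / Real.log s) := by gcongr
      _ = _ := by ring
  have hkey : a ^ (2 - p) ≤ Real.exp (2 * m * P * c) := by
    rw [Real.rpow_def_of_pos hapos]
    apply Real.exp_le_exp.2
    have h7 : (p - 2) * Real.log s ≤ 2 * P * c := by
      rwa [le_div_iff₀ (by linarith)] at hd
    nlinarith [mul_le_mul_of_nonneg_left hla (sub_nonneg.2 hp2)]
  have : a ^ (2 : ℝ) = a ^ (2 - p) * a ^ p := by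
    rw [← Real.rpow_add hapos]; ring_nf
  rw [ha2, this]
  nlinarith [mul_le_mul_of_nonneg_right hkey hap]

lemma aux_pow {a t p T C N : ℝ} (ha : 0 ≤ a) (ht : 0 < t) (hat : a ≤ t ^ (-N)) (hC : 1 ≤ C)
    (hp : 1 ≤ p) (hT : 0 < T) (hTp : t ^ (-N * (p - 1)) ≤ T ^ p) :
    (a / (C * T)) ^ p ≤ a / C := by
  rcases ha.eq_or_lt with h0 | h0
  · rw [← h0]; simp [Real.zero_rpow (by linarith : p ≠ 0)]
  rw [Real.div_rpow ha (by positivity), Real.mul_rpow (by positivity) hT.le]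
  have h1 : a ^ p = a * a ^ (p - 1) := by
    nth_rw 2 [← Real.rpow_one a]
    rw [← Real.rpow_add h0]; ring_nf
  have h2 : a ^ (p - 1) ≤ T ^ p := by
    refine le_trans (Real.rpow_le_rpow ha hat (by linarith)) ?_
    rwa [← Real.rpow_mul ht.le]
  have h3 : C ≤ C ^ p := by
    nth_rw 1 [← Real.rpow_one C]
    exact Real.rpow_le_rpow_of_exponent_le hC hp
  have hTpp : 0 < T ^ p := by positivity
  have hCpp : 0 < C ^ p := by positivity
  rw [div_le_div_iff₀ (by positivity) (by positivity), h1]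
  calc a * a ^ (p - 1) * C ≤ a * T ^ p * C ^ p := by gcongr
    _ = _ := by ring

lemma aux_exp {P t p : ℝ} {n : ℕ} (ht : 0 < t) (hp2 : 2 ≤ p) (hpP : p ≤ P) :
    t ^ (-(n : ℝ) * (p - 1)) ≤ (t ^ (-(n : ℝ) *
          (if t ≤ 1 ∨ (1 < t ∧ 4 < P) then
            1 / P + (if t ≤ 1 then (1 : ℝ) else 2 / P) * (1 - 2 / P)
          else 1 / 2))) ^ p := by
  rw [← Real.rpow_mul ht.le]
  have hn : (0 : ℝ) ≤ n := by positivity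
  have hP : 0 < P := by linarith
  by_cases h1 : t ≤ 1
  · simp only [h1, true_or, if_true]
    apply Real.rpow_le_rpow_of_exponent_ge ht h1
    have : p / P ≤ 1 := by rw [div_le_one hP]; exact hpP
    have h : p - 1 ≤ (1 / P + 1 * (1 - 2 / P)) * p := by
      have : (1 / P + 1 * (1 - 2 / P)) * p = p - p / P := by field_simp; ring
      linarith
    nlinarith
  · push Not at h1
    apply Real.rpow_le_rpow_of_exponent_le h1.le
    simp only [not_le.2 h1, false_or, h1, true_and, if_false]
    have hK : (if 4 < P then 1 / P + 2 / P * (1 - 2 / P) else 1 / 2) ≤ 1 / 2 := by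
      split_ifs with h4
      · have hx : 1 / P ≤ 1 / 4 := by
          apply one_div_le_one_div_of_le <;> linarith
        have e : 2 / P = 2 * (1 / P) := by ring
        rw [e]
        nlinarith
      · exact le_rfl
    have h : (if 4 < P then 1 / P + 2 / P * (1 - 2 / P) else 1 / 2) * p ≤ p - 1 := by
      nlinarith
    nlinarith

lemma etaKer_nonneg (n : ℕ) {t m : ℝ} (ht : 0 < t) (x : Esp n) : 0 ≤ etaKer n t m x := by
  unfold etaKer; positivity

lemma etaKer_le (n : ℕ) {t m : ℝ} (ht : 0 < t) (hm : 0 < m) (x : Esp n) :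
    etaKer n t m x ≤ t ^ (-(n : ℝ)) := by
  unfold etaKer
  have : (1 + ‖x‖ / t) ^ (-m) ≤ 1 := by
    apply Real.rpow_le_one_of_one_le_of_nonpos
    · have : 0 ≤ ‖x‖ / t := by positivity
      linarith
    · linarith
  have h : 0 ≤ t ^ (-(n : ℝ)) := by positivity
  nlinarith

lemma etaKer_meas (n : ℕ) (t m : ℝ) : Measurable (etaKer n t m) := by
  unfold etaKer; fun_prop

lemma etaKer_lint (n : ℕ) {t m : ℝ} (ht : 0 < t) :
    ∫⁻ x, ENNReal.ofReal (etaKer n t m x) =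
      ∫⁻ x : Esp n, ENNReal.ofReal ((1 + ‖x‖) ^ (-m)) := by
  have ht' : t⁻¹ ≠ 0 := by positivity
  have hmeas : Measurable fun x : Esp n => ENNReal.ofReal ((1 + ‖x‖) ^ (-m)) := by fun_prop
  have h1 := Measure.map_addHaar_smul (volume : Measure (Esp n)) ht'
  have h2 := lintegral_map (μ := (volume : Measure (Esp n))) hmeas
    (measurable_const_smul (t⁻¹))
  rw [h1, lintegral_smul_measure] at h2
  have h3 : ∀ x : Esp n, ENNReal.ofReal (etaKer n t m x) =
      ENNReal.ofReal (t ^ (-(n : ℝ))) * ENNReal.ofReal ((1 + ‖t⁻¹ • x‖) ^ (-m)) := by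
    intro x
    rw [← ENNReal.ofReal_mul (by positivity), norm_smul, norm_inv, Real.norm_of_nonneg ht.le]
    unfold etaKer
    congr 4
    field_simp
  simp_rw [h3]
  rw [lintegral_const_mul _ (by fun_prop), ← h2, smul_eq_mul, ← mul_assoc,
    ← ENNReal.ofReal_mul (by positivity)]
  have : t ^ (-(n : ℝ)) * |((t⁻¹) ^ Module.finrank ℝ (Esp n))⁻¹| = 1 := by
    rw [finrank_euclideanSpace_fin, abs_of_nonneg (by positivity), Real.rpow_neg ht.le,
      Real.rpow_natCast, inv_pow, inv_inv, inv_mul_cancel₀ (by positivity)]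
  rw [this]; simp

/-- `L^{p(·)} ⊂ L²`, at the level of modulars. -/
lemma aux_L2 (n : ℕ) {m c P : ℝ} (hm : 0 < m) (p : Esp n → ℝ) (hc : 0 < c)
    (hp : ∀ᵐ x, 2 ≤ p x) (hP : ∀ᵐ x, p x ≤ P)
    (hlog : ∀ x : Esp n, |1 / p x - 1 / 2| ≤ c / Real.log (Real.exp 1 + ‖x‖))
    (f : Esp n → ℝ) (hf : vMod n p f ≤ 1) :
    ∫⁻ x, ENNReal.ofReal (|f x| ^ 2) ≤ ENNReal.ofReal (Real.exp (2 * m * P * c)) +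
      ∫⁻ x : Esp n, ENNReal.ofReal ((1 + ‖x‖) ^ (-m)) := by
  calc ∫⁻ x, ENNReal.ofReal (|f x| ^ 2)
      ≤ ∫⁻ x, (ENNReal.ofReal (Real.exp (2 * m * P * c)) * ENNReal.ofReal |f x| ^ p x
          + ENNReal.ofReal ((1 + ‖x‖) ^ (-m))) := by
        apply lintegral_mono_ae
        filter_upwards [hp, hP] with x h2 h3
        rw [ENNReal.ofReal_rpow_of_nonneg (abs_nonneg _) (by linarith),
          ← ENNReal.ofReal_mul (by positivity), ← ENNReal.ofReal_add (by positivity) (by positivity)]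
        exact ENNReal.ofReal_le_ofReal
          (aux_sq (abs_nonneg _) h2 h3 (norm_nonneg _) hc hm (hlog x))
    _ = ENNReal.ofReal (Real.exp (2 * m * P * c)) * vMod n p f +
          ∫⁻ x : Esp n, ENNReal.ofReal ((1 + ‖x‖) ^ (-m)) := by
        rw [lintegral_add_right _ (by fun_prop), lintegral_const_mul' _ _ ENNReal.ofReal_ne_top]
        rfl
    _ ≤ _ := by
        gcongr
        calc _ ≤ ENNReal.ofReal (Real.exp (2 * m * P * c)) * 1 := by gcongr
          _ = _ := mul_one _

lemma aux_inf {X K : ℝ} {S T : Set ℝ} (hK : 0 < K) (hS : S.Nonempty) (hT : T.Nonempty)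
    (hSp : ∀ a ∈ S, 0 < a) (hTp : ∀ b ∈ T, 0 < b)
    (h : ∀ a ∈ S, ∀ b ∈ T, X ≤ K * a * b) : X ≤ K * sInf S * sInf T := by
  have h1 : ∀ b ∈ T, X ≤ K * sInf S * b := by
    intro b hb
    have hb0 := hTp b hb
    have : X / (K * b) ≤ sInf S := by
      apply le_csInf hS
      intro a ha
      rw [div_le_iff₀ (by positivity)]
      linarith [h a ha b hb]
    rw [div_le_iff₀ (by positivity)] at this
    linarith
  have hs0 : 0 ≤ sInf S := Real.sInf_nonneg fun a ha => (hSp a ha).le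
  rcases hs0.eq_or_lt with h0 | h0
  · obtain ⟨b, hb⟩ := hT
    have := h1 b hb
    rw [← h0] at this ⊢
    simpa using this
  · have : X / (K * sInf S) ≤ sInf T := by
      apply le_csInf hT
      intro b hb
      rw [div_le_iff₀ (by positivity)]
      linarith [h1 b hb]
    rw [div_le_iff₀ (by positivity)] at this
    linarith

/-- `L¹` and `L^∞` bounds for the convolution, combined into a modular bound. -/
lemma aux_conv (n : ℕ) {t m A C T : ℝ} (ht : 0 < t) (hm : 0 < m) (hA : 0 < A) (hC : 1 ≤ C)
    (hT : 0 < T)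
    (p : Esp n → ℝ) (hp : ∀ᵐ x, 1 ≤ p x)
    (hTp : ∀ᵐ x, t ^ (-(n : ℝ) * (p x - 1)) ≤ T ^ (p x))
    (f : Esp n → ℝ) (hf : AEMeasurable f volume)
    (hfA : ∫⁻ x, ENNReal.ofReal |f x| ≤ ENNReal.ofReal A)
    (hJ : ∫⁻ x : Esp n, ENNReal.ofReal ((1 + ‖x‖) ^ (-m)) ≤ ENNReal.ofReal C) :
    vMod n p (fun x => convR n (etaKer n t m) f x / (A * (C * T))) ≤ 1 := by
  have hCpos : 0 < C := by linarith
  have hG : ∀ x, ENNReal.ofReal |convR n (etaKer n t m) f x| ≤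
      ∫⁻ y, ENNReal.ofReal (etaKer n t m (x - y)) * ENNReal.ofReal |f y| := by
    intro x
    unfold convR
    rw [← Real.enorm_eq_ofReal_abs]
    refine (enorm_integral_le_lintegral_enorm _).trans (le_of_eq ?_)
    congr 1; ext y
    rw [enorm_mul, Real.enorm_eq_ofReal (etaKer_nonneg n ht _), Real.enorm_eq_ofReal_abs]
  have hbd : ∀ x, |convR n (etaKer n t m) f x| / A ≤ t ^ (-(n : ℝ)) := by
    intro x
    rw [div_le_iff₀ hA, ← ENNReal.ofReal_le_ofReal_iff (by positivity)]
    refine (hG x).trans ?_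
    calc _ ≤ ∫⁻ y, ENNReal.ofReal (t ^ (-(n : ℝ))) * ENNReal.ofReal |f y| := by
          gcongr with y
          exact etaKer_le n ht hm _
      _ = ENNReal.ofReal (t ^ (-(n : ℝ))) * ∫⁻ y, ENNReal.ofReal |f y| :=
          lintegral_const_mul' _ _ ENNReal.ofReal_ne_top
      _ ≤ ENNReal.ofReal (t ^ (-(n : ℝ))) * ENNReal.ofReal A := by gcongr
      _ = _ := (ENNReal.ofReal_mul (by positivity)).symm
  have hker := etaKer_meas n t m
  have hint : ∫⁻ x, ENNReal.ofReal |convR n (etaKer n t m) f x| ≤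
      ENNReal.ofReal C * ENNReal.ofReal A := by
    calc _ ≤ ∫⁻ x, ∫⁻ y, ENNReal.ofReal (etaKer n t m (x - y)) * ENNReal.ofReal |f y| :=
          lintegral_mono hG
      _ = ∫⁻ y, ∫⁻ x, ENNReal.ofReal (etaKer n t m (x - y)) * ENNReal.ofReal |f y| := by
          apply lintegral_lintegral_swap
          refine AEMeasurable.mul (f := fun z : Esp n × Esp n =>
            ENNReal.ofReal (etaKer n t m (z.1 - z.2)))
            (g := fun z : Esp n × Esp n => ENNReal.ofReal |f z.2|) ?_ ?_
          · exact (ENNReal.measurable_ofReal.comp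
              (hker.comp (measurable_fst.sub measurable_snd))).aemeasurable
          · have : AEMeasurable (fun y => ENNReal.ofReal |f y|) (volume : Measure (Esp n)) :=
              (ENNReal.measurable_ofReal.comp measurable_abs).comp_aemeasurable hf
            exact this.comp_snd
      _ = ∫⁻ y, (∫⁻ x : Esp n, ENNReal.ofReal ((1 + ‖x‖) ^ (-m))) * ENNReal.ofReal |f y| := by
          congr 1; ext y
          rw [lintegral_mul_const' _ _ ENNReal.ofReal_ne_top,
            lintegral_sub_right_eq_self (fun x => ENNReal.ofReal (etaKer n t m x)) y,
            etaKer_lint n ht]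
      _ ≤ ∫⁻ y, ENNReal.ofReal C * ENNReal.ofReal |f y| := by gcongr
      _ = ENNReal.ofReal C * ∫⁻ y, ENNReal.ofReal |f y| :=
          lintegral_const_mul' _ _ ENNReal.ofReal_ne_top
      _ ≤ _ := by gcongr
  unfold vMod
  calc _ ≤ ∫⁻ x, ENNReal.ofReal ((A * C)⁻¹) * ENNReal.ofReal |convR n (etaKer n t m) f x| := by
        apply lintegral_mono_ae
        filter_upwards [hp, hTp] with x h1 h2
        have := aux_pow (a := |convR n (etaKer n t m) f x| / A) (by positivity) ht (hbd x) hC h1 hT h2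
        rw [ENNReal.ofReal_rpow_of_nonneg (abs_nonneg _) (by linarith),
          ← ENNReal.ofReal_mul (by positivity), abs_div,
          abs_of_pos (by positivity : 0 < A * (C * T))]
        apply ENNReal.ofReal_le_ofReal
        calc _ = (|convR n (etaKer n t m) f x| / A / (C * T)) ^ p x := by rw [div_div]
          _ ≤ _ := this
          _ = _ := by field_simp
    _ = ENNReal.ofReal ((A * C)⁻¹) * ∫⁻ x, ENNReal.ofReal |convR n (etaKer n t m) f x| :=
        lintegral_const_mul' _ _ ENNReal.ofReal_ne_top
    _ ≤ ENNReal.ofReal ((A * C)⁻¹) * (ENNReal.ofReal C * ENNReal.ofReal A) := by gcongr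
    _ = 1 := by
        rw [← ENNReal.ofReal_mul (by positivity), ← ENNReal.ofReal_mul (by positivity),
          show (A * C)⁻¹ * (C * A) = 1 by field_simp]
        simp

/-- Lemma 3.13, second estimate, of the paper: for `p ∈ P^log` with `p⁻ = p_∞ = 2` and
`p⁺ < ∞`, `‖η_{t,m} * (uv)‖_{L^{p(·)}} ≤ C t^{-nK(t)} ‖u‖_{L^{p(·)}} ‖v‖_{L^{p(·)}}`, with
`ζ(t) = 2/p⁻ = 1` for `0 < t ≤ 1`, `ζ(t) = 2/p⁺` for `t > 1`, `K(t) = 1/p⁺ + ζ(t)(1-2/p⁺)`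
if `0 < t ≤ 1` or (`t > 1` and `p⁺ > 4`), and `K(t) = 1/2` if `t > 1` and `p⁺ ≤ 4`. -/
theorem statement12 (n : ℕ) (hn : 1 ≤ n) (m : ℝ) (hm : (n : ℝ) < m)
    (pexp : Esp n → ℝ) (hpmeas : Measurable pexp) (hp1 : ∀ x, 1 ≤ pexp x)
    (pp : ℝ) (hpp : pp = essSup pexp volume)
    (hbdd : IsBoundedUnder (· ≤ ·) (ae (volume : Measure (Esp n))) pexp)
    (hpm2 : essInf pexp volume = 2)
    (hlog : IsLogHolder n pexp (1 / 2)) :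
    ∃ C : ℝ, 0 < C ∧ ∀ t : ℝ, 0 < t → ∀ u v : Esp n → ℝ,
      MemVLp n pexp u → MemVLp n pexp v →
      luxNorm n pexp (convR n (etaKer n t m) (fun x => u x * v x)) ≤
        C * t ^ (-(n : ℝ) *
          (if t ≤ 1 ∨ (1 < t ∧ 4 < pp) then
            1 / pp + (if t ≤ 1 then (1 : ℝ) else 2 / pp) * (1 - 2 / pp)
          else 1 / 2)) *
          luxNorm n pexp u * luxNorm n pexp v := by
  obtain ⟨c, hc, -, hdec⟩ := hlog
  have hnn : (0 : ℝ) ≤ n := by positivity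
  have hm0 : 0 < m := by linarith
  have hP : ∀ᵐ x, pexp x ≤ pp := by rw [hpp]; exact ae_le_essSup hbdd
  have h2 : ∀ᵐ x, 2 ≤ pexp x := by
    rw [← hpm2]
    exact ae_essInf_le (isBoundedUnder_of ⟨1, hp1⟩)
  set J := ∫⁻ x : Esp n, ENNReal.ofReal ((1 + ‖x‖) ^ (-m)) with hJdef
  have hJ : J < ∞ := finite_integral_one_add_norm (by rwa [finrank_euclideanSpace_fin])
  set E := Real.exp (2 * m * pp * c)
  have hE : 0 < E := Real.exp_pos _
  have hJ0 : 0 ≤ J.toReal := ENNReal.toReal_nonneg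
  set A := E + J.toReal with hAdef
  have hA : 0 < A := by positivity
  set D := 1 + J.toReal
  have hD : 1 ≤ D := by simp [D]
  have hJD : J ≤ ENNReal.ofReal D := by
    rw [← ENNReal.ofReal_toReal hJ.ne]
    exact ENNReal.ofReal_le_ofReal (by simp [D])
  have hAe : ENNReal.ofReal E + J = ENNReal.ofReal A := by
    rw [hAdef, ENNReal.ofReal_add hE.le hJ0, ENNReal.ofReal_toReal hJ.ne]
  refine ⟨A * D, by positivity, ?_⟩
  intro t ht u v hu hv
  set T := t ^ (-(n : ℝ) *
          (if t ≤ 1 ∨ (1 < t ∧ 4 < pp) then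
            1 / pp + (if t ≤ 1 then (1 : ℝ) else 2 / pp) * (1 - 2 / pp)
          else 1 / 2)) with hTdef
  have hT : 0 < T := Real.rpow_pos_of_pos ht _
  have hTp : ∀ᵐ x, t ^ (-(n : ℝ) * (pexp x - 1)) ≤ T ^ (pexp x) := by
    filter_upwards [h2, hP] with x a b
    exact aux_exp (n := n) ht a b
  apply aux_inf (by positivity) hu.2 hv.2 (fun a ha => ha.1) (fun a ha => ha.1)
  rintro a ⟨ha, ha'⟩ b ⟨hb, hb'⟩
  have hu2 := aux_L2 n hm0 pexp hc h2 hP hdec _ ha'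
  have hv2 := aux_L2 n hm0 pexp hc h2 hP hdec _ hb'
  rw [hAe] at hu2 hv2
  have hL1 : ∫⁻ x, ENNReal.ofReal |u x * v x| ≤ ENNReal.ofReal (a * b * A) := by
    calc _ ≤ ∫⁻ x, ENNReal.ofReal (a * b / 2) *
          (ENNReal.ofReal (|u x / a| ^ 2) + ENNReal.ofReal (|v x / b| ^ 2)) := by
          apply lintegral_mono
          intro x
          simp only
          rw [← ENNReal.ofReal_add (by positivity) (by positivity),
            ← ENNReal.ofReal_mul (by positivity)]
          apply ENNReal.ofReal_le_ofReal
          have e : |u x * v x| = a * b * (|u x / a| * |v x / b|) := by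
            rw [abs_mul, abs_div, abs_div, abs_of_pos ha, abs_of_pos hb]
            field_simp
          rw [e]
          have hab : 0 < a * b := by positivity
          nlinarith [mul_nonneg hab.le (sq_nonneg (|u x / a| - |v x / b|))]
      _ = ENNReal.ofReal (a * b / 2) * ((∫⁻ x, ENNReal.ofReal (|u x / a| ^ 2)) +
            ∫⁻ x, ENNReal.ofReal (|v x / b| ^ 2)) := by
          rw [lintegral_const_mul' _ _ ENNReal.ofReal_ne_top, lintegral_add_left']
          exact (ENNReal.measurable_ofReal.comp
            ((measurable_abs.comp (measurable_id.div_const a)).pow_const 2)).comp_aemeasurable hu.1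
      _ ≤ ENNReal.ofReal (a * b / 2) * (ENNReal.ofReal A + ENNReal.ofReal A) := by gcongr
      _ = _ := by
          rw [← ENNReal.ofReal_add hA.le hA.le, ← ENNReal.ofReal_mul (by positivity)]
          congr 1; ring
  have hfin := aux_conv n ht hm0 (by positivity : 0 < a * b * A) hD hT pexp
    (Eventually.of_forall hp1) hTp (fun x => u x * v x) (hu.1.mul hv.1) hL1 hJD
  refine csInf_le ⟨0, fun y hy => hy.1.le⟩ ⟨by positivity, ?_⟩
  convert hfin using 4
  ring
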